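/- Let G = (V, E) be a finite directed acyclic graph with two distinct nodes r and s such that r has no incoming edges and s has no outgoing edges, and let m ∈ ℕ. Then every integer-valued flow of value m from r to s, i.e., every x : E → ℕ satisfying flow conservation at each node v ∉ {r, s} and total outflow of r equal to m, can be decomposed into m paths: there exist directed paths P_1,…,P_m from r to s (not necessarily distinct) such that x is the sum of their edge incidence vectors. -/

import Mathlib

open Finset

/-- `IsPath tl hd r s es`: the nonempty list of edges `es` forms a directed path from
`r` to `s` in the graph whose edges `e` go from `tl e` to `hd e`. -/
def IsPath {E V : Type} (tl hd : E → V) (r s : V) (es : List E) : Prop :=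
  ∃ h : es ≠ [], es.Chain' (fun a b => hd a = tl b) ∧
    tl (es.head h) = r ∧ hd (es.getLast h) = s

/-!
Give `r` a supply and `s` a demand equal to the value of the flow. Each edge is counted once at its
tail and once at its head, so if the balance holds at every node but `s`, it also holds at `s`.
When the value is nonzero, an edge carrying flow leaves `r`, and the balance lets one keep walking
along edges carrying flow. By acyclicity the walk repeats no edge and stops, which can only happen
at `s`. Its incidence vector is a flow of value `1` below `x`, and subtracting it lowers the value
by `1`. A flow of value `0` vanishes, since a walk along its edges would never stop.
-/

section Path

variable {V E : Type} {tl hd : E → V} {r s : V}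

theorem IsPath.isChain {es : List E} (h : IsPath tl hd r s es) :
    es.IsChain fun e f => hd e = tl f :=
  h.2.1

theorem isPath_singleton {e : E} : IsPath tl hd r s [e] ↔ tl e = r ∧ hd e = s :=
  ⟨fun h => h.2.2, fun h => ⟨by simp, List.isChain_singleton e, h⟩⟩

theorem isPath_cons_cons {e f : E} {es : List E} :
    IsPath tl hd r s (e :: f :: es) ↔ tl e = r ∧ IsPath tl hd (hd e) s (f :: es) := by
  constructor
  · rintro ⟨_, hchain, hr, hs⟩
    obtain ⟨hef, hes⟩ := List.isChain_cons_cons.1 hchain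
    exact ⟨hr, by simp, hes, hef.symm, by simpa using hs⟩
  · rintro ⟨hr, _, hes, hef, hs⟩
    exact ⟨by simp, List.isChain_cons_cons.2 ⟨hef.symm, hes⟩, hr, by simpa using hs⟩

theorem IsPath.cons {e : E} {es : List E} (h : IsPath tl hd (hd e) s es) :
    IsPath tl hd (tl e) s (e :: es) := by
  obtain _ | ⟨f, es⟩ := es
  · exact absurd rfl h.1
  · exact isPath_cons_cons.2 ⟨rfl, h⟩

theorem IsPath.induction_on {motive : V → List E → Prop} {es : List E}
    (h : IsPath tl hd r s es) (singleton : ∀ e, hd e = s → motive (tl e) [e])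
    (cons : ∀ e es, motive (hd e) es → motive (tl e) (e :: es)) : motive r es := by
  induction es generalizing r with
  | nil => exact absurd rfl h.1
  | cons e es ih =>
    obtain _ | ⟨f, es⟩ := es
    · obtain ⟨rfl, he⟩ := isPath_singleton.1 h
      exact singleton e he
    · obtain ⟨rfl, hes⟩ := isPath_cons_cons.1 h
      exact cons e _ (ih hes)

theorem exists_isPath_of_transGen {e f : E} (h : Relation.TransGen (fun a b => hd a = tl b) e f) :
    ∃ es, IsPath tl hd (tl e) (tl f) es := by
  induction h using Relation.TransGen.head_induction_on with
  | @single a haf => exact ⟨[a], isPath_singleton.2 ⟨rfl, haf⟩⟩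
  | @head a b hab _ ih =>
    obtain ⟨es, hes⟩ := ih
    exact ⟨a :: es, (hab ▸ hes).cons⟩

theorem IsPath.rank_lt {α : Type*} [Preorder α] {rank : V → α}
    (hrank : ∀ e, rank (tl e) < rank (hd e)) {es : List E} (h : IsPath tl hd r s es) :
    rank r < rank s :=
  h.induction_on (motive := fun v _ => rank v < rank s) (fun e he => he ▸ hrank e)
    fun e _ ih => (hrank e).trans ih

/-- The graph whose edges `e` go from `tl e` to `hd e` has no directed cycle, a cycle being a
directed path that ends where it starts. -/
def IsAcyclic (tl hd : E → V) : Prop :=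
  ∀ v es, ¬ IsPath tl hd v v es

theorem isAcyclic_of_rank_lt {α : Type*} [Preorder α] {rank : V → α}
    (hrank : ∀ e, rank (tl e) < rank (hd e)) : IsAcyclic tl hd :=
  fun _ _ h => (h.rank_lt hrank).false

theorem IsAcyclic.not_transGen_self (hG : IsAcyclic tl hd) (e : E) :
    ¬ Relation.TransGen (fun a b => hd a = tl b) e e := by
  intro h
  obtain ⟨es, hes⟩ := exists_isPath_of_transGen h
  exact hG _ es hes

theorem IsAcyclic.wellFounded [Finite E] (hG : IsAcyclic tl hd) :
    WellFounded fun f e => hd e = tl f := by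
  let follows : E → E → Prop := fun f e => Relation.TransGen (fun a b => hd a = tl b) e f
  have : IsTrans E follows := ⟨fun _ _ _ h₁ h₂ => h₂.trans h₁⟩
  have : Std.Irrefl follows := ⟨hG.not_transGen_self⟩
  exact (Finite.wellFounded_of_trans_of_irrefl follows).mono fun _ _ h => .single h

theorem IsAcyclic.nodup_of_isPath (hG : IsAcyclic tl hd) {es : List E}
    (h : IsPath tl hd r s es) : es.Nodup := by
  have hchain : es.IsChain (Relation.TransGen fun a b => hd a = tl b) :=
    h.isChain.imp fun _ _ => .single
  refine hchain.pairwise.imp ?_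
  rintro e _ he rfl
  exact hG.not_transGen_self e he

end Path

theorem eq_of_sum_eq_of_forall_ne {ι M : Type*} [AddCommMonoid M]
    [IsRightCancelAdd M] {t : Finset ι} {f g : ι → M} {i : ι} (hi : i ∈ t)
    (hsum : ∑ j ∈ t, f j = ∑ j ∈ t, g j) (hne : ∀ j ∈ t, j ≠ i → f j = g j) : f i = g i := by
  classical
  rw [← add_sum_erase t f hi, ← add_sum_erase t g hi,
    sum_congr rfl fun j hj => hne j (mem_of_mem_erase hj) (ne_of_mem_erase hj)] at hsum
  exact add_right_cancel hsum

section Flow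

variable {V E M : Type*} [DecidableEq V] [Fintype E] [AddCommMonoid M]
  {tl hd : E → V} {r s : V} {m n : M} {x y : E → M}

/-- `x` is a flow of value `m` from `r` to `s` in the graph whose edges `e` go from `tl e` to
`hd e`. The value is encoded as a supply of `m` at `r` and a demand of `m` at `s`, so that a single
subtraction-free balance equation holds at every node, including `r` and `s`. -/
def IsFlow (tl hd : E → V) (r s : V) (m : M) (x : E → M) : Prop :=
  ∀ v, (∑ e with hd e = v, x e) + (if v = r then m else 0) =
    (∑ e with tl e = v, x e) + if v = s then m else 0

theorem isFlow_single [DecidableEq E] (e : E) (m : M) :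
    IsFlow tl hd (tl e) (hd e) m (Pi.single e m) := by
  intro v
  simp [sum_pi_single', eq_comm (a := v), add_comm]

theorem IsFlow.exists_tl_eq_of_inflow_ne_zero (h : IsFlow tl hd r s m x) {v : V} (hvs : v ≠ s)
    (hv : (∑ e with hd e = v, x e) + (if v = r then m else 0) ≠ 0) :
    ∃ e, tl e = v ∧ x e ≠ 0 := by
  rw [h v, if_neg hvs, add_zero] at hv
  simpa using exists_ne_zero_of_sum_ne_zero hv

section ZeroSumFree

variable [Subsingleton (AddUnits M)]

theorem IsFlow.eq_zero (hwf : WellFounded fun f e : E => hd e = tl f)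
    (h : IsFlow tl hd r s 0 x) : x = 0 := by
  funext e
  induction e using hwf.induction with
  | _ e ih =>
    have hout : ∑ f with tl f = hd e, x f = 0 :=
      sum_eq_zero fun f hf => ih f (mem_filter.1 hf).2.symm
    have hin : ∑ f with hd f = hd e, x f = 0 := by simpa [hout] using h (hd e)
    exact sum_eq_zero_iff.1 hin e (by simp)

theorem IsFlow.exists_tl_eq_hd_of_ne_zero (h : IsFlow tl hd r s m x) {e : E} (he : x e ≠ 0)
    (hes : hd e ≠ s) : ∃ f, tl f = hd e ∧ x f ≠ 0 := by
  refine h.exists_tl_eq_of_inflow_ne_zero hes fun h0 => he ?_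
  exact sum_eq_zero_iff.1 (add_eq_zero.1 h0).1 e (by simp)

end ZeroSumFree

section Cancellation

variable [IsCancelAdd M]

theorem IsFlow.trans {u : V} (hx : IsFlow tl hd r u m x) (hy : IsFlow tl hd u s m y) :
    IsFlow tl hd r s m (x + y) := by
  intro v
  simp only [Pi.add_apply, sum_add_distrib]
  apply add_right_cancel (b := if v = u then m else 0)
  convert congrArg₂ (· + ·) (hx v) (hy v) using 1 <;> abel

theorem IsFlow.of_add (hx : IsFlow tl hd r s m x) (hxy : IsFlow tl hd r s (m + n) (x + y)) :
    IsFlow tl hd r s n y := by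
  intro v
  have hv := hxy v
  simp only [Pi.add_apply, sum_add_distrib, ite_add_zero] at hv
  apply add_left_cancel (a := (∑ e with hd e = v, x e) + (if v = r then m else 0))
  convert hv using 1
  · abel
  · rw [hx v]
    abel

theorem isFlow_of_conservation
    (hcons : ∀ v, v ≠ r → v ≠ s → ∑ e with hd e = v, x e = ∑ e with tl e = v, x e)
    (hval : ∑ e with tl e = r, x e = (∑ e with hd e = r, x e) + m) : IsFlow tl hd r s m x := by
  have hne (v : V) (hvs : v ≠ s) : (∑ e with hd e = v, x e) + (if v = r then m else 0) =
      (∑ e with tl e = v, x e) + if v = s then m else 0 := by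
    obtain rfl | hvr := eq_or_ne v r
    · simp [hvs, hval]
    · simp [hvs, hvr, hcons]
  let nodes : Finset V := {r, s} ∪ univ.image tl ∪ univ.image hd
  have htotal : ∑ v ∈ nodes, ∑ e with hd e = v, x e = ∑ v ∈ nodes, ∑ e with tl e = v, x e := by
    rw [sum_fiberwise_of_maps_to (fun e _ => by simp [nodes]),
      sum_fiberwise_of_maps_to (fun e _ => by simp [nodes])]
  intro v
  obtain rfl | hvs := eq_or_ne v s
  · exact eq_of_sum_eq_of_forall_ne (t := nodes) (by simp [nodes])
      (by rw [sum_add_distrib, sum_add_distrib, htotal]; simp [nodes])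
      fun w _ => hne w
  · exact hne v hvs

end Cancellation

end Flow

section Decomposition

variable {V E : Type} [DecidableEq V] [Fintype E] {tl hd : E → V} {r s : V}

section ZeroSumFree

variable {M : Type*} [AddCommMonoid M] [Subsingleton (AddUnits M)] {m : M} {x : E → M}

theorem IsFlow.exists_isPath_of_ne_zero (hG : IsAcyclic tl hd) (h : IsFlow tl hd r s m x) {e : E}
    (he : x e ≠ 0) : ∃ es, IsPath tl hd (tl e) s es ∧ ∀ f ∈ es, x f ≠ 0 := by
  induction e using hG.wellFounded.induction with
  | _ e ih =>
    obtain hes | hes := eq_or_ne (hd e) s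
    · exact ⟨[e], isPath_singleton.2 ⟨rfl, hes⟩, by simpa⟩
    · obtain ⟨f, hf, hxf⟩ := h.exists_tl_eq_hd_of_ne_zero he hes
      obtain ⟨es, hpath, hsupp⟩ := ih f hf.symm hxf
      exact ⟨e :: es, (hf ▸ hpath).cons, List.forall_mem_cons.2 ⟨he, hsupp⟩⟩

theorem IsFlow.exists_isPath_of_value_ne_zero (hG : IsAcyclic tl hd) (hrs : r ≠ s)
    (h : IsFlow tl hd r s m x) (hm : m ≠ 0) : ∃ es, IsPath tl hd r s es ∧ ∀ e ∈ es, x e ≠ 0 := by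
  obtain ⟨e, rfl, he⟩ := h.exists_tl_eq_of_inflow_ne_zero hrs fun h0 =>
    hm (by simpa using (add_eq_zero.1 h0).2)
  exact h.exists_isPath_of_ne_zero hG he

end ZeroSumFree

variable [DecidableEq E] {m : ℕ} {x : E → ℕ}

theorem IsPath.isFlow_count {es : List E} (h : IsPath tl hd r s es) :
    IsFlow tl hd r s 1 fun e => es.count e := by
  have count_cons (e : E) (es : List E) :
      (fun f => (e :: es).count f) = Pi.single e 1 + fun f => es.count f := by
    funext f
    simp [List.count_cons, Pi.single_apply, eq_comm (a := e), add_comm]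
  refine h.induction_on (motive := fun v es => IsFlow tl hd v s 1 fun e => es.count e) ?_ ?_
  · rintro e rfl
    simpa [count_cons, ← Pi.zero_def] using isFlow_single e 1
  · intro e es hes
    rw [count_cons]
    exact (isFlow_single e 1).trans hes

theorem IsFlow.exists_eq_count_add (hG : IsAcyclic tl hd) (hrs : r ≠ s)
    (h : IsFlow tl hd r s (m + 1) x) : ∃ (es : List E) (y : E → ℕ), IsPath tl hd r s es ∧
      IsFlow tl hd r s m y ∧ x = (fun e => es.count e) + y := by
  obtain ⟨es, hpath, hsupp⟩ := h.exists_isPath_of_value_ne_zero hG hrs (by simp)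
  have hle : (fun e => es.count e) ≤ x := by
    intro e
    by_cases he : e ∈ es
    · simpa [(hG.nodup_of_isPath hpath).count, he, Nat.one_le_iff_ne_zero] using hsupp e he
    · simp [List.count_eq_zero_of_not_mem he]
  obtain ⟨y, rfl⟩ := exists_add_of_le hle
  exact ⟨es, y, hpath, hpath.isFlow_count.of_add (add_comm m 1 ▸ h), rfl⟩

theorem IsFlow.exists_eq_sum_incidence (hG : IsAcyclic tl hd) (hrs : r ≠ s)
    (h : IsFlow tl hd r s m x) : ∃ Ps : Fin m → List E, (∀ k, IsPath tl hd r s (Ps k)) ∧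
      ∀ e, x e = ∑ k, if e ∈ Ps k then 1 else 0 := by
  induction m generalizing x with
  | zero => exact ⟨Fin.elim0, Fin.rec0, by simp [h.eq_zero hG.wellFounded]⟩
  | succ m ih =>
    obtain ⟨es, y, hpath, hy, rfl⟩ := h.exists_eq_count_add hG hrs
    obtain ⟨Ps, hPs, hsum⟩ := ih hy
    refine ⟨Fin.cons es Ps, Fin.cases hpath hPs, fun e => ?_⟩
    rw [Fin.sum_univ_succ]
    simp [hsum, (hG.nodup_of_isPath hpath).count]

end Decomposition

theorem integral_flow_decomposes_into_paths_general
    {V E : Type} [DecidableEq V] [Fintype E] [DecidableEq E] {tl hd : E → V} {r s : V}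
    (hrs : r ≠ s) (hG : IsAcyclic tl hd) {m : ℕ} {x : E → ℕ}
    (hcons : ∀ v, v ≠ r → v ≠ s → ∑ e with hd e = v, x e = ∑ e with tl e = v, x e)
    (hval : ∑ e with tl e = r, x e = (∑ e with hd e = r, x e) + m) :
    ∃ Ps : Fin m → List E, (∀ k, IsPath tl hd r s (Ps k)) ∧
      ∀ e, x e = ∑ k, if e ∈ Ps k then 1 else 0 :=
  (isFlow_of_conservation hcons hval).exists_eq_sum_incidence hG hrs

/-- In a finite DAG with source `r` (no incoming edges) and sink `s` (no outgoing
edges), every integer-valued flow of value `m` from `r` to `s` decomposes into `m`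
directed paths from `r` to `s`: `x` is the sum of their edge incidence vectors. -/
theorem integral_flow_decomposes_into_paths
    {V E : Type} [Fintype V] [Fintype E] [DecidableEq V] [DecidableEq E]
    (tl hd : E → V) (r s : V) (hrs : r ≠ s)
    (hr : ∀ e, hd e ≠ r) (hs : ∀ e, tl e ≠ s)
    -- acyclicity, witnessed by a rank function
    (rank : V → ℕ) (hrank : ∀ e, rank (tl e) < rank (hd e))
    (m : ℕ) (x : E → ℕ)
    -- flow conservation at every node other than r and s
    (hcons : ∀ v, v ≠ r → v ≠ s →
      ∑ e ∈ univ.filter (fun e => hd e = v), x e =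
        ∑ e ∈ univ.filter (fun e => tl e = v), x e)
    -- total outflow of r equal to m
    (hval : ∑ e ∈ univ.filter (fun e => tl e = r), x e = m) :
    ∃ Ps : Fin m → List E, (∀ k, IsPath tl hd r s (Ps k)) ∧
      ∀ e, x e = ∑ k, if e ∈ Ps k then 1 else 0 :=
  integral_flow_decomposes_into_paths_general hrs (isAcyclic_of_rank_lt hrank) hcons
    (by simp [hr, hval])
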